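/- If max{n_1, n_2, n_3, n_4} is a prime number (all n_i ≥ 1), then the complete 4-partite graph K_{n_1,n_2,n_3,n_4} is S-determined: every graph with the same Seidel spectrum as K_{n_1,n_2,n_3,n_4} is switching equivalent to a graph isomorphic to K_{n_1,n_2,n_3,n_4}. -/

import Mathlib

open Polynomial Matrix Finset SimpleGraph

/- The Seidel matrix `S(G) = J - I - 2A(G)` of a simple graph `G`. -/
open scoped Classical in
noncomputable def seidelMatrix {V : Type*} [Fintype V] [DecidableEq V]
    (G : SimpleGraph V) : Matrix V V ℝ :=
  (Matrix.of fun _ _ => (1 : ℝ)) - 1 - 2 • G.adjMatrix ℝ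

/-- Two graphs on the same vertex set are switching equivalent iff their Seidel
matrices are conjugate by a diagonal `±1` matrix. -/
def SwitchingEquiv {V : Type*} [Fintype V] [DecidableEq V]
    (G H : SimpleGraph V) : Prop :=
  ∃ ε : V → ℝ, (∀ v, ε v = 1 ∨ ε v = -1) ∧
    seidelMatrix H = Matrix.diagonal ε * seidelMatrix G * Matrix.diagonal ε

/-- A graph `G` is determined, up to switching, by its Seidel spectrum
(`S`-determined) if every graph with the same Seidel spectrum is switching
equivalent to a graph isomorphic to `G`. -/
def SDetermined {V : Type} [Fintype V] [DecidableEq V] (G : SimpleGraph V) : Prop :=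
  ∀ (W : Type) [Fintype W] [DecidableEq W] (H : SimpleGraph W),
    (seidelMatrix H).charpoly = (seidelMatrix G).charpoly →
    ∃ H' : SimpleGraph W, SwitchingEquiv H H' ∧ Nonempty (H' ≃g G)

/-!
Let `k ≥ 4` be the number of parts. The form `S(K) + I` of a complete multipartite graph `K` is the
pullback, along the map sending a vertex to its part, of `2I - J`, which is nonnegative on the
hyperplane of vectors with sum zero. The existence of such a hyperplane depends only on the
spectrum. For a graph `H` it forces the product of the entries of `S(H) + I` at the three pairs
from any three vertices to be `-1` unless two of the vertices are twins. So `H` is switching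
equivalent to the complete multipartite graph whose parts are the twin classes, and as `2I - J` is
invertible, there are `k` of them.

If the parts of the two graphs have sizes `n i` and `m i`, comparing characteristic polynomials
gives `∏ (x - n i) - ∏ (x - m i) = c x ^ (k - 2)` for some integer `c`. For `x = p := max n i` this
shows that `p ^ (k - 2)` divides `∏ (p - m i)`. Since moreover `∏ m i = ∏ n i` is divisible by the
prime `p` and `∑ m i = ∑ n i ≤ k p`, this is only possible if some `m i` equals `p`. Then `c = 0`
and the sizes agree.
-/

section NumberTheory

variable {ι : Type*} [Fintype ι] {p : ℕ} {m : ι → ℕ}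

lemma pow_le_prod_sub_of_pow_dvd (hp : p.Prime) (hm : ∀ i, 1 ≤ m i) (hne : ∀ i, m i ≠ p) {r : ℕ}
    (hdvd : (p : ℤ) ^ r ∣ ∏ i, ((p : ℤ) - m i)) : p ^ r ≤ ∏ i with p ∣ m i, (m i - p) := by
  have hcoprime : IsCoprime ((p : ℤ) ^ r) (∏ i with ¬ p ∣ m i, ((p : ℤ) - m i)) := by
    refine IsCoprime.prod_right fun i hi => IsCoprime.pow_left ?_
    rw [(Nat.prime_iff_prime_int.1 hp).irreducible.coprime_iff_not_dvd, dvd_sub_right dvd_rfl]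
    exact_mod_cast (mem_filter.1 hi).2
  rw [← prod_filter_mul_prod_filter_not univ (p ∣ m ·)] at hdvd
  have hdvd' := Int.natAbs_dvd_natAbs.2 (hcoprime.dvd_of_dvd_mul_right hdvd)
  have hlt (i) (hi : p ∣ m i) : p < m i := lt_of_le_of_ne (Nat.le_of_dvd (hm i) hi) (hne i).symm
  have habs : (∏ i with p ∣ m i, ((p : ℤ) - m i)).natAbs = ∏ i with p ∣ m i, (m i - p) := by
    rw [← Int.natAbsHom_apply, map_prod]
    refine prod_congr rfl fun i hi => ?_
    have := hlt i (mem_filter.1 hi).2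
    simp only [Int.natAbsHom_apply]
    omega
  rw [habs, Int.natAbs_pow, Int.natAbs_natCast] at hdvd'
  exact Nat.le_of_dvd (prod_pos fun i hi => Nat.sub_pos_of_lt (hlt i (mem_filter.1 hi).2)) hdvd'

lemma card_mul_add_sum_add_card_le {T : Finset ι} {b : ι → ℕ} (hm : ∀ i, 1 ≤ m i)
    (hT : ∀ i ∈ T, m i = p + b i) (hsum : ∑ i, m i ≤ Fintype.card ι * p) :
    #T * p + ∑ i ∈ T, b i + Fintype.card ι ≤ Fintype.card ι * p + #T := by
  classical
  have hin : ∑ i ∈ T, m i = #T * p + ∑ i ∈ T, b i := by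
    rw [sum_congr rfl hT, sum_add_distrib, sum_const, smul_eq_mul]
  have hout : #Tᶜ ≤ ∑ i ∈ Tᶜ, m i := by
    simpa using card_nsmul_le_sum Tᶜ m 1 fun i _ => hm i
  rw [← sum_add_sum_compl T m] at hsum
  have := card_add_card_compl T
  omega

lemma prod_lt_pow_of_sum_le {T : Finset ι} {a : ι → ℕ} (hp : 2 ≤ p) (hι : 4 ≤ Fintype.card ι)
    (hT : T.Nonempty)
    (hsum : #T * p + ∑ i ∈ T, p * a i + Fintype.card ι ≤ Fintype.card ι * p + #T) :
    ∏ i ∈ T, p * a i < p ^ (Fintype.card ι - 2) := by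
  obtain ⟨k, hk⟩ : ∃ k, Fintype.card ι = k + 2 := ⟨_, (Nat.sub_add_cancel (by omega)).symm⟩
  by_contra! hle
  rw [hk] at hle hsum
  rw [Nat.add_sub_cancel] at hle
  have hsum_ge : k ≤ ∑ i ∈ T, a i := by
    refine (Nat.pow_le_pow_iff_right hp).1 (hle.trans ?_)
    rw [← prod_pow_eq_pow_sum]
    exact prod_le_prod' fun i _ => Nat.mul_le_pow (by omega) (a i)
  have hcard : #T ≤ k + 2 := hk ▸ card_le_univ T
  rw [← mul_sum] at hsum
  have hpk : p * k ≤ p * ∑ i ∈ T, a i := Nat.mul_le_mul_left p hsum_ge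
  obtain hone | htwo : #T = 1 ∨ 2 ≤ #T := by have := hT.card_pos; omega
  · obtain ⟨j, rfl⟩ := card_eq_one.1 hone
    rw [prod_singleton] at hle
    simp only [card_singleton, sum_singleton] at hsum hpk
    have : k + 1 ≤ p := by linarith
    have : p ^ 2 ≤ p ^ k := Nat.pow_le_pow_right (by omega) (by omega)
    nlinarith
  · nlinarith [Nat.mul_le_mul_right p htwo]

/-- Otherwise the `m i` divisible by `p` exceed `p` by positive multiples of `p`, and the product of
these excesses is divisible by `p ^ (k - 2)`; that is too much for the bound on the sum. -/
lemma exists_eq_of_pow_dvd_prod_sub (hp : p.Prime) (hι : 4 ≤ Fintype.card ι) (hm : ∀ i, 1 ≤ m i)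
    (hsum : ∑ i, m i ≤ Fintype.card ι * p) (hprod : p ∣ ∏ i, m i)
    (hpow : (p : ℤ) ^ (Fintype.card ι - 2) ∣ ∏ i, ((p : ℤ) - m i)) : ∃ i, m i = p := by
  by_contra! hne
  have hT : (univ.filter fun i => p ∣ m i).Nonempty := by
    obtain ⟨j, -, hj⟩ := (hp.prime.dvd_finsetProd_iff _).1 hprod
    exact ⟨j, by simpa using hj⟩
  have hmul (i) (hi : i ∈ univ.filter fun i => p ∣ m i) : m i - p = p * (m i / p - 1) := by
    rw [Nat.mul_sub, Nat.mul_div_cancel' (mem_filter.1 hi).2, mul_one]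
  have hexcess := card_mul_add_sum_add_card_le (b := fun i => p * (m i / p - 1)) hm
    (fun i hi => by
      rw [← hmul i hi, Nat.add_sub_cancel' (Nat.le_of_dvd (hm i) (mem_filter.1 hi).2)]) hsum
  refine (pow_le_prod_sub_of_pow_dvd hp hm hne hpow).not_gt ?_
  rw [prod_congr rfl hmul]
  exact prod_lt_pow_of_sum_le hp.two_le hι hT hexcess

end NumberTheory

section Sizes

variable {ι : Type*} [Fintype ι] {n m : ι → ℕ}

lemma exists_perm_of_prod_X_sub_C_eq {R : Type*} [CommRing R] [IsDomain R] {f g : ι → R}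
    (h : ∏ i, (X - C (f i)) = ∏ i, (X - C (g i))) : ∃ σ : Equiv.Perm ι, ∀ i, f (σ i) = g i := by
  classical
  have hroots (f : ι → R) : (∏ i, (X - C (f i))).roots = univ.val.map f := by
    rw [← roots_multiset_prod_X_sub_C (univ.val.map f), Multiset.map_map]
    rfl
  have hcard (a : R) : Nonempty ({i // g i = a} ≃ {i // f i = a}) := by
    have hcount := congrArg (fun q => Multiset.count a q.roots) h
    simp only [hroots, Multiset.count_map] at hcount
    rw [← Fintype.card_eq, Fintype.card_subtype, Fintype.card_subtype]
    simpa only [Finset.card, filter_val, eq_comm] using hcount.symm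
  exact ⟨Equiv.ofFiberEquiv fun a => (hcard a).some, Equiv.ofFiberEquiv_map _⟩

lemma exists_perm_of_prod_sub_eq_mul_pow (hι : 4 ≤ Fintype.card ι) (hp : (univ.sup n).Prime)
    (hm : ∀ i, 1 ≤ m i) (hsum : ∑ i, m i = ∑ i, n i) {c : ℤ}
    (h : ∀ x : ℤ, ∏ i, (x - n i) - ∏ i, (x - m i) = c * x ^ (Fintype.card ι - 2)) :
    ∃ σ : Equiv.Perm ι, ∀ i, n (σ i) = m i := by
  have : Nonempty ι := Fintype.card_pos_iff.1 (by omega)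
  obtain ⟨i, -, hi⟩ := exists_mem_eq_sup univ univ_nonempty n
  have hle (j : ι) : n j ≤ univ.sup n := le_sup (mem_univ j)
  obtain ⟨p, hpn⟩ : ∃ p, univ.sup n = p := ⟨_, rfl⟩
  rw [hpn] at hp hi hle
  have hpow : -∏ j, ((p : ℤ) - m j) = c * (p : ℤ) ^ (Fintype.card ι - 2) := by
    have hzero : ∏ j, ((p : ℤ) - n j) = 0 :=
      prod_eq_zero (mem_univ i) (by rw [hi, sub_self])
    rw [← h, hzero, zero_sub]
  have hprod : ∏ j, m j = ∏ j, n j := by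
    have hzero := h 0
    rw [zero_pow (by omega), mul_zero, sub_eq_zero] at hzero
    simp only [zero_sub, prod_neg] at hzero
    exact_mod_cast (mul_left_cancel₀ (pow_ne_zero _ (by norm_num)) hzero).symm
  obtain ⟨j, hj⟩ : ∃ j, m j = p :=
    exists_eq_of_pow_dvd_prod_sub hp hι hm
      (hsum.trans_le (sum_le_card_nsmul _ _ _ fun j _ => hle j))
      (hprod ▸ hi ▸ dvd_prod_of_mem n (mem_univ i))
      (dvd_neg.1 (Dvd.intro_left c hpow.symm))
  have hc : c = 0 := by
    rw [prod_eq_zero (mem_univ j) (by rw [hj, sub_self]), neg_zero, eq_comm] at hpow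
    exact (mul_eq_zero.1 hpow).resolve_right (pow_ne_zero _ (by exact_mod_cast hp.ne_zero))
  have hpoly : ∏ i, (X - C (n i : ℤ)) = ∏ i, (X - C (m i : ℤ)) := by
    refine Polynomial.funext fun x => ?_
    simpa [eval_prod, hc, sub_eq_zero] using h x
  obtain ⟨σ, hσ⟩ := exists_perm_of_prod_X_sub_C_eq hpoly
  exact ⟨σ, fun i => Nat.cast_injective (hσ i)⟩

end Sizes

section Hyperplane

variable {K M N : Type*} [Field K] [LinearOrder K] [AddCommGroup M] [Module K M]
  [AddCommGroup N] [Module K N]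

/-- A bilinear form is nonnegative on a hyperplane if it is positive semidefinite on the kernel of
some linear functional. For a symmetric form this says that the negative index of inertia is at
most one, in a form that needs no eigenvalues. -/
def NonnegOnHyperplane (B : LinearMap.BilinForm K M) : Prop :=
  ∃ ℓ : Module.Dual K M, ∀ x, ℓ x = 0 → 0 ≤ B x x

lemma NonnegOnHyperplane.comp {B : LinearMap.BilinForm K M} (hB : NonnegOnHyperplane B)
    (f : N →ₗ[K] M) : NonnegOnHyperplane (B.comp f f) :=
  let ⟨ℓ, hℓ⟩ := hB
  ⟨ℓ ∘ₗ f, fun x => hℓ (f x)⟩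

lemma NonnegOnHyperplane.toBilin'_submatrix {V W : Type*} [Fintype V] [DecidableEq V]
    [Fintype W] [DecidableEq W] {A : Matrix V V K} (h : NonnegOnHyperplane (toBilin' A))
    (f : W → V) : NonnegOnHyperplane (toBilin' (A.submatrix f f)) := by
  have hmul : A.submatrix f f = ((1 : Matrix V V K).submatrix id f)ᵀ * A *
      (1 : Matrix V V K).submatrix id f := by
    ext v w
    simp [Matrix.mul_apply, Matrix.one_apply]
  rw [hmul, ← toBilin'_comp]
  exact h.comp _

variable [IsStrictOrderedRing K] {B : LinearMap.BilinForm K M} {ℓ : Module.Dual K M}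

lemma mem_span_of_nonneg_on_ker (hB : B.IsSymm) (hℓ : ∀ x, ℓ x = 0 → 0 ≤ B x x) {z : M}
    (hz : ℓ z = 0) (hzz : B z z = 0) : B z ∈ Submodule.span K {ℓ} := by
  have hker : LinearMap.ker ℓ ≤ LinearMap.ker (B z) := by
    intro y hy
    have hcs := LinearMap.BilinForm.apply_sq_le_of_symm (B.restrict (LinearMap.ker ℓ))
      (fun x => hℓ x x.2) ⟨fun x y => hB.eq x y⟩ ⟨z, hz⟩ ⟨y, hy⟩
    change B z y ^ 2 ≤ B z z * B y y at hcs
    rw [hzz, zero_mul] at hcs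
    exact pow_eq_zero_iff two_ne_zero |>.1 (le_antisymm hcs (sq_nonneg _))
  simpa using mem_span_of_iInf_ker_le_ker (L := fun _ : Unit => ℓ) (by simpa using hker)

/-- Both `B f` and `B g` turn out to be multiples of the functional cutting out the hyperplane. -/
lemma NonnegOnHyperplane.not_linearIndependent_of_isotropic (hB : B.IsSymm)
    (h : NonnegOnHyperplane B) {f g : M} (hff : B f f = 0) (hfg : B f g = 0) (hgg : B g g = 0) :
    ¬ LinearIndependent K ![B f, B g] := by
  intro hli
  rw [LinearIndependent.pair_iff] at hli
  obtain ⟨ℓ, hℓ⟩ := h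
  have hgf : B g f = 0 := by rw [← hB.eq, hfg]
  obtain ⟨c, hc⟩ := Submodule.mem_span_singleton.1 <|
    mem_span_of_nonneg_on_ker hB hℓ (z := ℓ g • f - ℓ f • g) (by simp [mul_comm])
      (by simp [hff, hfg, hgf, hgg])
  have hcf : c * ℓ f = 0 := by simpa [hff, hgf] using DFunLike.congr_fun hc f
  have hcg : c * ℓ g = 0 := by simpa [hfg, hgg] using DFunLike.congr_fun hc g
  obtain ⟨hf, hg⟩ : ℓ f = 0 ∧ ℓ g = 0 := by
    rcases eq_or_ne c 0 with rfl | hc0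
    · have := hli (ℓ g) (-ℓ f) (by simpa [sub_eq_add_neg] using hc.symm)
      simpa [and_comm] using this
    · exact ⟨(mul_eq_zero.1 hcf).resolve_left hc0, (mul_eq_zero.1 hcg).resolve_left hc0⟩
  obtain ⟨a, ha⟩ := Submodule.mem_span_singleton.1 (mem_span_of_nonneg_on_ker hB hℓ hf hff)
  obtain ⟨b, hb⟩ := Submodule.mem_span_singleton.1 (mem_span_of_nonneg_on_ker hB hℓ hg hgg)
  obtain ⟨-, ha0⟩ := hli b (-a) (by rw [← ha, ← hb, smul_smul, smul_smul, neg_mul, mul_comm,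
    neg_smul, add_neg_cancel])
  have hf0 : B f = 0 := by rw [← ha, neg_eq_zero.1 ha0, zero_smul]
  exact one_ne_zero (hli 1 0 (by simp [hf0])).1

lemma NonnegOnHyperplane.not_linearIndependent_sub (hB : B.IsSymm) (h : NonnegOnHyperplane B)
    {x y z : M} {c : K} (hxx : B x x = c) (hyy : B y y = c) (hzz : B z z = c) (hxy : B x y = c)
    (hxz : B x z = c) (hyz : B y z = c) : ¬ LinearIndependent K ![B y - B x, B z - B y] := by
  have hyx : B y x = c := by rw [← hB.eq, hxy]
  have hzy : B z y = c := by rw [← hB.eq, hyz]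
  simpa only [map_sub] using h.not_linearIndependent_of_isotropic hB (f := y - x) (g := z - y)
    (by simp [*]) (by simp [*]) (by simp [*])

end Hyperplane

lemma linearIndependent_sub_of_forall_eq_one_or_neg_one {ι K M : Type*} [Field K] [CharZero K]
    [AddCommGroup M] [Module K M] (b : Module.Basis ι K M) {f g h : Module.Dual K M}
    (hf : ∀ i, f (b i) = 1 ∨ f (b i) = -1) (hg : ∀ i, g (b i) = 1 ∨ g (b i) = -1)
    (hh : ∀ i, h (b i) = 1 ∨ h (b i) = -1) (hfg : f ≠ g) (hgh : g ≠ h) (hfh : f ≠ h) :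
    LinearIndependent K ![g - f, h - g] := by
  rw [LinearIndependent.pair_iff]
  intro s t hst
  obtain ⟨i, hi⟩ : ∃ i, f (b i) ≠ h (b i) := by
    by_contra! heq
    exact hfh (b.ext heq)
  have hst0 : s = 0 ∨ t = 0 := by
    have hsti : s * (g (b i) - f (b i)) + t * (h (b i) - g (b i)) = 0 := DFunLike.congr_fun hst _
    rcases hf i with h1 | h1 <;> rcases hg i with h2 | h2 <;> rcases hh i with h3 | h3 <;>
      rw [h1, h2, h3] at hsti <;> grind
  rcases hst0 with rfl | rfl
  · simpa [sub_eq_zero, hgh.symm] using hst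
  · simpa [sub_eq_zero, hfg.symm] using hst

section Spectral

variable {V W : Type*} [Fintype V] [DecidableEq V] [Fintype W] [DecidableEq W]

lemma exists_eq_transpose_mul_mul_of_charpoly_eq {A : Matrix V V ℝ} {B : Matrix W W ℝ}
    (hA : A.IsHermitian) (hB : B.IsHermitian) (h : A.charpoly = B.charpoly) :
    ∃ P : Matrix W V ℝ, A = Pᵀ * B * P := by
  obtain ⟨e⟩ : Nonempty (W ≃ V) := by
    rw [← Fintype.card_eq]
    simpa using congrArg natDegree h.symm
  have hB' : (reindex e e B).IsHermitian := hB.submatrix _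
  obtain ⟨U, hU⟩ : ∃ U : Matrix V V ℝ, U = hA.eigenvectorUnitary := ⟨_, rfl⟩
  obtain ⟨U', hU'⟩ : ∃ U' : Matrix V V ℝ, U' = hB'.eigenvectorUnitary := ⟨_, rfl⟩
  have hdiag : U'ᵀ * reindex e e B * U' = diagonal hA.eigenvalues := by
    rw [hA.eigenvalues_eq_eigenvalues_iff hB' |>.2 (by rw [h, charpoly_reindex])]
    simpa [Unitary.conjStarAlgAut_apply, star_eq_conjTranspose,
      conjTranspose_eq_transpose_of_trivial, Function.comp_def, hU']
      using hB'.conjStarAlgAut_star_eigenvectorUnitary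
  have hspec : A = U * diagonal hA.eigenvalues * Uᵀ := by
    simpa [Unitary.conjStarAlgAut_apply, star_eq_conjTranspose,
      conjTranspose_eq_transpose_of_trivial, Function.comp_def, hU] using hA.spectral_theorem
  have hsub : B = (reindex e e B).submatrix e e := by simp
  refine ⟨(U' * Uᵀ).submatrix e id, ?_⟩
  conv_rhs => rw [hsub, transpose_submatrix, submatrix_mul_equiv, submatrix_mul_equiv,
    submatrix_id_id]
  rw [hspec, ← hdiag]
  simp only [transpose_mul, transpose_transpose, Matrix.mul_assoc]

lemma NonnegOnHyperplane.toBilin'_of_charpoly_eq {A : Matrix V V ℝ} {B : Matrix W W ℝ}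
    (h : NonnegOnHyperplane (toBilin' B)) (hA : A.IsHermitian) (hB : B.IsHermitian)
    (hAB : A.charpoly = B.charpoly) : NonnegOnHyperplane (toBilin' A) := by
  obtain ⟨P, rfl⟩ := exists_eq_transpose_mul_mul_of_charpoly_eq hA hB hAB
  rw [← toBilin'_comp]
  exact h.comp _

end Spectral

section SignMatrix

variable {V W : Type*}

open scoped Classical in
/-- The matrix `S(G) + I` of a graph `G`. Unlike `S(G)` it has all entries `±1`, and it is pulled
back entrywise when `G` is. -/
noncomputable def signMatrix (G : SimpleGraph V) : Matrix V V ℝ :=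
  Matrix.of fun v w => if G.Adj v w then -1 else 1

lemma signMatrix_comap (f : V → W) (G : SimpleGraph W) :
    signMatrix (G.comap f) = (signMatrix G).submatrix f f :=
  rfl

variable (G : SimpleGraph V)

lemma signMatrix_comm (v w : V) : signMatrix G v w = signMatrix G w v := by
  classical exact if_congr (G.adj_comm v w) rfl rfl

@[simp]
lemma signMatrix_self (v : V) : signMatrix G v v = 1 := by
  simp [signMatrix]

lemma signMatrix_eq_one_or_neg_one (v w : V) :
    signMatrix G v w = 1 ∨ signMatrix G v w = -1 := by
  by_cases h : G.Adj v w <;> simp [signMatrix, h]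

lemma signMatrix_mul_self (v w : V) : signMatrix G v w * signMatrix G v w = 1 :=
  mul_self_eq_one_iff.2 (signMatrix_eq_one_or_neg_one G v w)

lemma isHermitian_signMatrix : (signMatrix G).IsHermitian :=
  Matrix.ext fun v w => signMatrix_comm G w v

lemma isSymm_toBilin'_signMatrix [Fintype V] [DecidableEq V] :
    (toBilin' (signMatrix G)).IsSymm :=
  isSymm_toBilin'_iff_isSymm.2 (Matrix.ext fun v w => signMatrix_comm G w v)

lemma signMatrix_top_apply [DecidableEq V] (v w : V) :
    signMatrix (⊤ : SimpleGraph V) v w = if v = w then 1 else -1 := by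
  by_cases h : v = w <;> simp [signMatrix, h]

variable [Fintype V] [DecidableEq V]

lemma signMatrix_eq_seidelMatrix_add_one : signMatrix G = seidelMatrix G + 1 := by
  ext v w
  simp only [signMatrix, seidelMatrix, two_nsmul, Matrix.add_apply, Matrix.sub_apply, of_apply,
    adjMatrix_apply]
  split_ifs <;> ring

lemma nonnegOnHyperplane_signMatrix_top :
    NonnegOnHyperplane (toBilin' (signMatrix (⊤ : SimpleGraph V))) := by
  refine ⟨∑ v, LinearMap.proj v, fun x hx => ?_⟩
  have hsum : ∑ v, x v = 0 := by simpa using hx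
  have hrow (v : V) : ∑ w, x v * (if v = w then 1 else -1) * x w = 2 * x v ^ 2 := by
    calc ∑ w, x v * (if v = w then 1 else -1) * x w
        = ∑ w, ((if v = w then 2 * x v * x w else 0) - x v * x w) :=
          sum_congr rfl fun w _ => by split_ifs <;> ring
      _ = 2 * x v ^ 2 := by
          rw [sum_sub_distrib, ← mul_sum, hsum, sum_ite_eq, if_pos (mem_univ v)]
          ring
  simp only [toBilin'_apply, signMatrix_top_apply, hrow]
  positivity

lemma charpoly_signMatrix :
    (signMatrix G).charpoly = (seidelMatrix G).charpoly.comp (X - 1) := by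
  rw [signMatrix_eq_seidelMatrix_add_one]
  simpa [sub_eq_add_neg, -scalar_apply] using (seidelMatrix G).charpoly_sub_scalar (-1)

variable {G} {H : SimpleGraph V}

lemma SwitchingEquiv.charpoly_signMatrix_eq (h : SwitchingEquiv G H) :
    (signMatrix H).charpoly = (signMatrix G).charpoly := by
  obtain ⟨ε, hε, h⟩ := h
  have hsq (v) : ε v * ε v = 1 := mul_self_eq_one_iff.2 (hε v)
  rw [charpoly_signMatrix, charpoly_signMatrix, h, Matrix.charpoly_mul_comm, ← Matrix.mul_assoc,
    diagonal_mul_diagonal]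
  simp [hsq]

lemma SwitchingEquiv.of_signMatrix {ε : V → ℝ} (hε : ∀ v, ε v = 1 ∨ ε v = -1)
    (h : ∀ v w, signMatrix H v w = ε v * signMatrix G v w * ε w) : SwitchingEquiv G H := by
  refine ⟨ε, hε, ?_⟩
  ext v w
  have hvw := h v w
  rw [signMatrix_eq_seidelMatrix_add_one, signMatrix_eq_seidelMatrix_add_one] at hvw
  rcases eq_or_ne v w with rfl | hne
  · simp only [seidelMatrix, two_nsmul, diagonal_mul, mul_diagonal]
    simp
  · simpa [hne] using hvw

end SignMatrix

section Twins

variable {V : Type*} {G : SimpleGraph V}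

/-- Two vertices are twins if the product of the three entries of `S(G) + I` over every triangle
containing both is `1`. These products are invariant under switching; for a complete multipartite
graph with at least three parts, the twin classes are the parts. -/
def twinSetoid (G : SimpleGraph V) : Setoid V where
  r u v := ∀ w, signMatrix G u v * signMatrix G v w * signMatrix G u w = 1
  iseqv :=
    { refl := fun u w => by simp [signMatrix_mul_self]
      symm := fun {u v} h w => by
        rw [← h w, signMatrix_comm G v u]
        ring
      trans := fun {u v x} h h' w =>
        calc signMatrix G u x * signMatrix G x w * signMatrix G u w
            = (signMatrix G u v * signMatrix G u v) * (signMatrix G v w * signMatrix G v w) *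
                (signMatrix G v x * signMatrix G v x) *
                (signMatrix G u x * signMatrix G x w * signMatrix G u w) := by
              simp only [signMatrix_mul_self, one_mul]
          _ = (signMatrix G u v * signMatrix G v w * signMatrix G u w) *
                (signMatrix G v x * signMatrix G x w * signMatrix G v w) *
                (signMatrix G u v * signMatrix G v x * signMatrix G u x) := by ring
          _ = 1 := by rw [h w, h' w, h x, one_mul, one_mul] }

variable [Fintype V] [DecidableEq V]

lemma toBilin'_signMatrix_smul_single (i j : V) (a : ℝ) :
    toBilin' (signMatrix G) (a • Pi.single i 1) (Pi.single j 1) = a * signMatrix G i j := by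
  simp

lemma toBilin'_signMatrix_ne_of_not_twinSetoid {i j : V} (hij : ¬ twinSetoid G i j) {a b : ℝ}
    (ha : a * a = 1) (hb : b * b = 1) :
    toBilin' (signMatrix G) (a • Pi.single i 1) ≠ toBilin' (signMatrix G) (b • Pi.single j 1) := by
  refine fun heq => hij fun s => ?_
  have hrow (s : V) : a * signMatrix G i s = b * signMatrix G j s := by
    rw [← toBilin'_signMatrix_smul_single, ← toBilin'_signMatrix_smul_single, heq]
  calc signMatrix G i j * signMatrix G j s * signMatrix G i s
      = (a * signMatrix G i j) * (a * signMatrix G i s) * signMatrix G j s := by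
        linear_combination -(signMatrix G i j * signMatrix G j s * signMatrix G i s) * ha
    _ = 1 := by
        rw [hrow, hrow, signMatrix_self, mul_one]
        linear_combination signMatrix G j s ^ 2 * hb + signMatrix_mul_self G j s

/-- Otherwise, suitably rescaled, the three basis vectors have all inner products equal to `1`. -/
lemma signMatrix_mul_mul_eq_neg_one
    (h : NonnegOnHyperplane (toBilin' (signMatrix G))) {u v w : V} (huv : ¬ twinSetoid G u v)
    (hvw : ¬ twinSetoid G v w) (huw : ¬ twinSetoid G u w) :
    signMatrix G u v * signMatrix G v w * signMatrix G u w = -1 := by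
  by_contra hne
  have hone : signMatrix G u v * signMatrix G v w * signMatrix G u w = 1 := by
    refine (mul_self_eq_one_iff.1 ?_).resolve_right hne
    rw [mul_mul_mul_comm, mul_mul_mul_comm (signMatrix G u v)]
    simp only [signMatrix_mul_self, mul_one]
  obtain ⟨e, he⟩ : ∃ e : V → V → ℝ, ∀ i, e i = signMatrix G i w • Pi.single i 1 :=
    ⟨_, fun _ => rfl⟩
  have hgram (i j : V) : toBilin' (signMatrix G) (e i) (e j) =
      signMatrix G i j * signMatrix G j w * signMatrix G i w := by
    rw [he, he, map_smul, toBilin'_signMatrix_smul_single, smul_eq_mul]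
    ring
  have hsign (i s : V) : toBilin' (signMatrix G) (e i) (Pi.basisFun ℝ V s) = 1 ∨
      toBilin' (signMatrix G) (e i) (Pi.basisFun ℝ V s) = -1 := by
    rw [he, Pi.basisFun_apply, toBilin'_signMatrix_smul_single, ← mul_self_eq_one_iff,
      mul_mul_mul_comm, signMatrix_mul_self, signMatrix_mul_self, one_mul]
  have hne {i j : V} (hij : ¬ twinSetoid G i j) :
      toBilin' (signMatrix G) (e i) ≠ toBilin' (signMatrix G) (e j) := by
    rw [he, he]
    exact toBilin'_signMatrix_ne_of_not_twinSetoid hij (signMatrix_mul_self _ _ _)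
      (signMatrix_mul_self _ _ _)
  refine h.not_linearIndependent_sub (isSymm_toBilin'_signMatrix G) (c := 1)
    (x := e u) (y := e v) (z := e w) ?_ ?_ ?_ ?_ ?_ ?_
    (linearIndependent_sub_of_forall_eq_one_or_neg_one (Pi.basisFun ℝ V) (hsign u) (hsign v)
      (hsign w) (hne huv) (hne hvw) (hne huw))
  iterate 6 simp [hgram, signMatrix_mul_self, hone]

/-- Switch so that a base vertex becomes adjacent to exactly its non-twins. -/
lemma switchingEquiv_comap_mk_top (h : NonnegOnHyperplane (toBilin' (signMatrix G))) :
    SwitchingEquiv G ((⊤ : SimpleGraph (Quotient (twinSetoid G))).comap (Quotient.mk _)) := by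
  classical
  rcases isEmpty_or_nonempty V with _ | ⟨⟨o⟩⟩
  · exact ⟨1, isEmptyElim, Matrix.ext isEmptyElim⟩
  refine .of_signMatrix (ε := fun v => if twinSetoid G v o then signMatrix G v o
    else -signMatrix G v o) (fun v => ?_) fun v w => ?_
  · rcases signMatrix_eq_one_or_neg_one G v o with h | h <;> split_ifs <;> simp [h]
  have hquot : signMatrix ((⊤ : SimpleGraph (Quotient (twinSetoid G))).comap (Quotient.mk _)) v w =
      if twinSetoid G v w then 1 else -1 := by
    simp [signMatrix_comap, signMatrix_top_apply, Quotient.eq]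
  rw [hquot]
  by_cases hvw : twinSetoid G v w
  · have hiff : twinSetoid G v o ↔ twinSetoid G w o :=
      ⟨(twinSetoid G).trans ((twinSetoid G).symm hvw), (twinSetoid G).trans hvw⟩
    have htri := hvw o
    by_cases hv : twinSetoid G v o <;> simp only [hvw, hv, ← hiff, if_true, if_false] <;>
      linear_combination -htri
  rw [if_neg hvw]
  by_cases hv : twinSetoid G v o <;> by_cases hw : twinSetoid G w o
  · exact absurd ((twinSetoid G).trans hv ((twinSetoid G).symm hw)) hvw
  · have htri := hv w
    rw [signMatrix_comm G o w] at htri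
    rw [if_pos hv, if_neg hw]
    linear_combination htri
  · have htri := hw v
    rw [signMatrix_comm G o v, signMatrix_comm G w v] at htri
    rw [if_neg hv, if_pos hw]
    linear_combination htri
  · rw [if_neg hv, if_neg hw]
    linear_combination -signMatrix_mul_mul_eq_neg_one h hvw hw hv

end Twins

section CharacteristicPolynomial

variable {ι κ V W R : Type*} [Fintype ι] [DecidableEq ι] [Fintype κ] [DecidableEq κ]
  [Fintype V] [DecidableEq V] [Fintype W] [DecidableEq W]

lemma X_pow_card_mul_charpoly_submatrix [CommRing R] (A : Matrix ι ι R) (φ : V → ι) :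
    X ^ Fintype.card ι * (A.submatrix φ φ).charpoly =
      X ^ Fintype.card V * (diagonal (fun i => (#{v | φ v = i} : R)) * A).charpoly := by
  have hleft : A.submatrix φ id * (1 : Matrix ι ι R).submatrix id φ = A.submatrix φ φ := by
    ext v w
    simp [Matrix.mul_apply, Matrix.one_apply]
  have hright : (1 : Matrix ι ι R).submatrix id φ * A.submatrix φ id =
      diagonal (fun i => (#{v | φ v = i} : R)) * A := by
    ext i j
    have hterm (v : V) : (1 : Matrix ι ι R) i (φ v) * A (φ v) j = if φ v = i then A i j else 0 := by
      rw [Matrix.one_apply, ite_mul, one_mul, zero_mul]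
      split_ifs <;> simp_all
    calc ∑ v, (1 : Matrix ι ι R) i (φ v) * A (φ v) j
        = ∑ v, if φ v = i then A i j else 0 := sum_congr rfl fun v _ => hterm v
      _ = (diagonal (fun i => (#{v | φ v = i} : R)) * A) i j := by
        rw [diagonal_mul, ← sum_filter, sum_const, nsmul_eq_mul]
  rw [← hleft, ← hright]
  exact charpoly_mul_comm' _ _

lemma det_diagonal_add_vecMulVec_of_field [Field R] {a : ι → R} (ha : ∀ i, a i ≠ 0) (u v : ι → R) :
    (diagonal a + vecMulVec u v).det = (∏ i, a i) * (1 + ∑ i, v i * (u i / a i)) := by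
  have hfactor : diagonal a + vecMulVec u v =
      diagonal a * (1 + replicateCol Unit (u / a) * replicateRow Unit v) := by
    rw [← vecMulVec_eq, Matrix.mul_add, Matrix.mul_one, mul_vecMulVec]
    congr 2
    ext i
    simp [mulVec_diagonal, mul_div_cancel₀, ha]
  rw [hfactor, det_mul, det_diagonal, det_one_add_replicateCol_mul_replicateRow]
  rfl

lemma det_diagonal_add_vecMulVec [CommRing R] [IsDomain R] {a : ι → R} (ha : ∀ i, a i ≠ 0)
    (u v : ι → R) : (diagonal a + vecMulVec u v).det =
      ∏ i, a i + ∑ i, u i * v i * ∏ j ∈ univ.erase i, a j := by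
  let f := algebraMap R (FractionRing R)
  have hf : Function.Injective f := IsFractionRing.injective R (FractionRing R)
  have hfa (i : ι) : (f ∘ a) i ≠ 0 := (map_ne_zero_iff f hf).2 (ha i)
  have hmap : f.mapMatrix (diagonal a + vecMulVec u v) =
      diagonal (f ∘ a) + vecMulVec (f ∘ u) (f ∘ v) := by
    ext i j
    simp [diagonal_apply, vecMulVec_apply, apply_ite f]
  apply hf
  rw [RingHom.map_det, hmap, det_diagonal_add_vecMulVec_of_field hfa, mul_add, mul_one, mul_sum]
  simp only [map_add, map_sum, map_mul, map_prod, Function.comp_apply]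
  refine congrArg _ (sum_congr rfl fun i _ => ?_)
  rw [← mul_prod_erase univ _ (mem_univ i)]
  have hfai : f (a i) ≠ 0 := hfa i
  field_simp

lemma two_mul_charpoly_diagonal_mul_signMatrix_top (d : ι → ℝ) :
    2 * (diagonal d * signMatrix (⊤ : SimpleGraph ι)).charpoly =
      X * derivative (∏ i, (X - C (2 * d i))) -
        C (Fintype.card ι - 2 : ℝ) * ∏ i, (X - C (2 * d i)) := by
  have hcharmatrix : (diagonal d * signMatrix (⊤ : SimpleGraph ι)).charmatrix =
      diagonal (fun i => X - C (2 * d i)) + vecMulVec (fun i => C (d i)) 1 := by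
    ext1 i j
    rw [charmatrix_apply, diagonal_mul, signMatrix_top_apply, Matrix.add_apply, vecMulVec_apply]
    rcases eq_or_ne i j with rfl | hij
    · simp only [diagonal_apply_eq, if_true, mul_one, C_mul, C_ofNat, Pi.one_apply]
      ring
    · simp [hij]
  have hderiv : X * derivative (∏ i, (X - C (2 * d i))) =
      (Fintype.card ι : ℝ[X]) * ∏ i, (X - C (2 * d i)) +
        2 * ∑ i, C (d i) * ∏ j ∈ univ.erase i, (X - C (2 * d j)) := by
    rw [derivative_prod_finset]
    calc X * ∑ i, (∏ j ∈ univ.erase i, (X - C (2 * d j))) * derivative (X - C (2 * d i))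
        = ∑ i, (∏ j, (X - C (2 * d j)) +
            2 * (C (d i) * ∏ j ∈ univ.erase i, (X - C (2 * d j)))) := by
          rw [mul_sum]
          refine sum_congr rfl fun i _ => ?_
          rw [← mul_prod_erase univ _ (mem_univ i), derivative_X_sub_C, C_mul, C_ofNat]
          ring
      _ = _ := by rw [sum_add_distrib, ← mul_sum, sum_const, card_univ, nsmul_eq_mul]
  rw [Matrix.charpoly, hcharmatrix, det_diagonal_add_vecMulVec fun i => X_sub_C_ne_zero _, hderiv]
  simp only [Pi.one_apply, mul_one, C_sub, C_ofNat, map_natCast]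
  ring

lemma eq_C_mul_X_pow_of_X_mul_derivative_eq [CommRing R] [IsDomain R] [CharZero R] {f : R[X]}
    {r : ℕ} (h : X * derivative f = C (r : R) * f) : f = C (f.coeff r) * X ^ r := by
  ext j
  have hj : (j : R) * f.coeff j = r * f.coeff j := by
    have := congrArg (coeff · j) h
    rw [coeff_C_mul] at this
    rw [← this]
    cases j <;> simp [coeff_X_mul, coeff_derivative, mul_comm]
  rw [coeff_C_mul_X_pow]
  split_ifs with hjr
  · rw [hjr]
  · refine (mul_eq_mul_right_iff.1 hj).resolve_left ?_
    exact_mod_cast hjr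

lemma exists_prod_X_sub_C_sub_eq_of_charpoly_eq (hι : 2 ≤ Fintype.card ι) {d e : ι → ℝ}
    (h : (diagonal d * signMatrix (⊤ : SimpleGraph ι)).charpoly =
      (diagonal e * signMatrix (⊤ : SimpleGraph ι)).charpoly) :
    ∃ c : ℝ, ∏ i, (X - C (2 * d i)) - ∏ i, (X - C (2 * e i)) = C c * X ^ (Fintype.card ι - 2) := by
  refine ⟨_, eq_C_mul_X_pow_of_X_mul_derivative_eq ?_⟩
  have hd := two_mul_charpoly_diagonal_mul_signMatrix_top d
  rw [h, two_mul_charpoly_diagonal_mul_signMatrix_top] at hd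
  rw [derivative_sub, Nat.cast_sub hι]
  push_cast
  linear_combination -hd

lemma coeff_zero_charpoly_diagonal_mul_signMatrix_top_ne_zero (hι : Fintype.card ι ≠ 2) {d : ι → ℝ}
    (hd : ∀ i, d i ≠ 0) :
    (diagonal d * signMatrix (⊤ : SimpleGraph ι)).charpoly.coeff 0 ≠ 0 := by
  intro h
  have heval := congrArg (eval 0) (two_mul_charpoly_diagonal_mul_signMatrix_top d)
  have hι' : (Fintype.card ι : ℝ) - 2 ≠ 0 := by
    rw [sub_ne_zero]
    exact_mod_cast hι
  rw [eval_mul, ← coeff_zero_eq_eval_zero (charpoly _), h] at heval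
  simp [eval_prod, prod_eq_zero_iff, hι', hd] at heval

lemma X_pow_mul_charpoly_eq_of_charpoly_comap_top_eq {φ : V → ι} {ψ : W → κ}
    (h : (signMatrix ((⊤ : SimpleGraph ι).comap φ)).charpoly =
      (signMatrix ((⊤ : SimpleGraph κ).comap ψ)).charpoly) :
    X ^ Fintype.card κ *
        (diagonal (fun i => (#{v | φ v = i} : ℝ)) * signMatrix (⊤ : SimpleGraph ι)).charpoly =
      X ^ Fintype.card ι *
        (diagonal (fun i => (#{w | ψ w = i} : ℝ)) * signMatrix (⊤ : SimpleGraph κ)).charpoly := by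
  have hcard : Fintype.card V = Fintype.card W := by simpa using congrArg natDegree h
  have hφ := X_pow_card_mul_charpoly_submatrix (signMatrix (⊤ : SimpleGraph ι)) φ
  have hψ := X_pow_card_mul_charpoly_submatrix (signMatrix (⊤ : SimpleGraph κ)) ψ
  rw [← signMatrix_comap] at hφ hψ
  rw [← h, ← hcard] at hψ
  refine mul_left_cancel₀ (pow_ne_zero (Fintype.card V) X_ne_zero) ?_
  linear_combination X ^ Fintype.card ι * hψ - X ^ Fintype.card κ * hφ

end CharacteristicPolynomial

section CompleteMultipartite

variable {ι V W : Type*} [Fintype ι] [Fintype V] [DecidableEq V] [Fintype W] [DecidableEq W]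

lemma card_le_of_charpoly_comap_top_eq {κ : Type*} [Fintype κ] {φ : V → ι} {ψ : W → κ}
    (hι : Fintype.card ι ≠ 2) (hφ : Function.Surjective φ)
    (h : (signMatrix ((⊤ : SimpleGraph ι).comap φ)).charpoly =
      (signMatrix ((⊤ : SimpleGraph κ).comap ψ)).charpoly) :
    Fintype.card ι ≤ Fintype.card κ := by
  classical
  by_contra! hlt
  obtain ⟨r, hr⟩ := Nat.exists_eq_add_of_lt hlt
  have hX := X_pow_mul_charpoly_eq_of_charpoly_comap_top_eq h
  rw [hr, add_assoc, pow_add, mul_assoc] at hX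
  have hX' := mul_left_cancel₀ (pow_ne_zero _ X_ne_zero) hX
  refine coeff_zero_charpoly_diagonal_mul_signMatrix_top_ne_zero hι
    (d := fun i => (#{v | φ v = i} : ℝ)) (fun i => ?_) ?_
  · obtain ⟨v, hv⟩ := hφ i
    exact Nat.cast_ne_zero.2 (card_ne_zero_of_mem (mem_filter.2 ⟨mem_univ v, hv⟩))
  · rw [hX', mul_coeff_zero]
    simp

lemma exists_switchingEquiv_comap_top_of_charpoly_eq {φ : V → ι} {H : SimpleGraph W}
    (hι : 2 < Fintype.card ι) (hφ : Function.Surjective φ)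
    (h : (signMatrix H).charpoly = (signMatrix ((⊤ : SimpleGraph ι).comap φ)).charpoly) :
    ∃ ψ : W → ι, Function.Surjective ψ ∧ SwitchingEquiv H ((⊤ : SimpleGraph ι).comap ψ) := by
  classical
  have hnonneg : NonnegOnHyperplane (toBilin' (signMatrix H)) :=
    (nonnegOnHyperplane_signMatrix_top.toBilin'_submatrix φ).toBilin'_of_charpoly_eq
      (isHermitian_signMatrix H) ((isHermitian_signMatrix _).submatrix φ) h
  have hswitch := switchingEquiv_comap_mk_top hnonneg
  have hle : Fintype.card ι ≤ Fintype.card (Quotient (twinSetoid H)) :=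
    card_le_of_charpoly_comap_top_eq hι.ne' hφ (h.symm.trans hswitch.charpoly_signMatrix_eq.symm)
  have hge : Fintype.card (Quotient (twinSetoid H)) ≤ Fintype.card ι :=
    card_le_of_charpoly_comap_top_eq (hι.trans_le hle).ne' Quotient.mk_surjective
      (hswitch.charpoly_signMatrix_eq.trans h)
  obtain ⟨e⟩ : Nonempty (Quotient (twinSetoid H) ≃ ι) := Fintype.card_eq.1 (hge.antisymm hle)
  have he : (⊤ : SimpleGraph ι).comap e = ⊤ := SimpleGraph.comap_top e.injective
  refine ⟨e ∘ Quotient.mk _, e.surjective.comp Quotient.mk_surjective, ?_⟩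
  rwa [← SimpleGraph.comap_comap, he]

lemma exists_prod_sub_card_fiber_eq [DecidableEq ι] (hι : 2 ≤ Fintype.card ι) {φ : V → ι}
    {ψ : W → ι} (h : (signMatrix ((⊤ : SimpleGraph ι).comap φ)).charpoly =
      (signMatrix ((⊤ : SimpleGraph ι).comap ψ)).charpoly) :
    ∃ c : ℤ, ∀ x : ℤ, ∏ i, (x - #{v | φ v = i}) - ∏ i, (x - #{w | ψ w = i}) =
      c * x ^ (Fintype.card ι - 2) := by
  obtain ⟨c, hc⟩ := exists_prod_X_sub_C_sub_eq_of_charpoly_eq hι <|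
    mul_left_cancel₀ (pow_ne_zero _ X_ne_zero) (X_pow_mul_charpoly_eq_of_charpoly_comap_top_eq h)
  have heval (x : ℤ) : 4 * ((∏ i, (x - #{v | φ v = i}) - ∏ i, (x - #{w | ψ w = i}) : ℤ) : ℝ) =
      c * x ^ (Fintype.card ι - 2) := by
    have hx := congrArg (eval (2 * x : ℝ)) hc
    simp only [eval_sub, eval_prod, eval_X, eval_C, eval_mul, eval_pow, ← mul_sub, mul_pow,
      prod_mul_distrib, prod_const, card_univ] at hx
    refine mul_left_cancel₀ (pow_ne_zero (Fintype.card ι - 2) (two_ne_zero (α := ℝ))) ?_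
    rw [← Nat.sub_add_cancel hι, pow_add, Nat.add_sub_cancel] at hx
    push_cast
    linear_combination hx
  refine ⟨∏ i, (1 - #{v | φ v = i} : ℤ) - ∏ i, (1 - #{w | ψ w = i} : ℤ), fun x => ?_⟩
  have hone := heval 1
  rw [Int.cast_one, one_pow, mul_one] at hone
  have hx := heval x
  rw [← hone] at hx
  refine Int.cast_injective (α := ℝ) (mul_left_cancel₀ four_ne_zero (hx.trans ?_))
  push_cast
  ring

end CompleteMultipartite

lemma nonempty_iso_comap_top {ι V W : Type*} [DecidableEq ι] [Fintype V] [Fintype W] {φ : V → ι}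
    {ψ : W → ι} (σ : Equiv.Perm ι) (h : ∀ i, #{v | φ v = σ i} = #{w | ψ w = i}) :
    Nonempty ((⊤ : SimpleGraph ι).comap ψ ≃g (⊤ : SimpleGraph ι).comap φ) := by
  have hfiber (i : ι) : Nonempty ({w // σ (ψ w) = i} ≃ {v // φ v = i}) := by
    rw [← Fintype.card_eq, Fintype.card_subtype, Fintype.card_subtype, ← σ.apply_symm_apply i, h]
    simp only [σ.injective.eq_iff]
  let e := Equiv.ofFiberEquiv fun i => (hfiber i).some
  have he (w : W) : φ (e w) = σ (ψ w) := Equiv.ofFiberEquiv_map _ w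
  exact ⟨⟨e, by simp [he]⟩⟩

lemma sDetermined_comap_top {ι : Type*} {V : Type} [Fintype ι] [DecidableEq ι] [Fintype V]
    [DecidableEq V] (hι : 4 ≤ Fintype.card ι) {φ : V → ι} (hφ : Function.Surjective φ)
    (hp : (univ.sup fun i => #{v | φ v = i}).Prime) :
    SDetermined ((⊤ : SimpleGraph ι).comap φ) := by
  intro W _ _ H hH
  have hcharpoly : (signMatrix H).charpoly =
      (signMatrix ((⊤ : SimpleGraph ι).comap φ)).charpoly := by
    rw [charpoly_signMatrix, charpoly_signMatrix, hH]
  obtain ⟨ψ, hψ, hswitch⟩ :=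
    exists_switchingEquiv_comap_top_of_charpoly_eq (by omega) hφ hcharpoly
  obtain ⟨c, hc⟩ := exists_prod_sub_card_fiber_eq (by omega)
    (hcharpoly.symm.trans hswitch.charpoly_signMatrix_eq.symm)
  have hcard : Fintype.card W = Fintype.card V := by simpa using congrArg natDegree hcharpoly
  have hsum : ∑ i, #{w | ψ w = i} = ∑ i, #{v | φ v = i} := by
    simpa only [← card_eq_sum_card_fiberwise fun _ _ => mem_univ _]
  have hpos (i : ι) : 1 ≤ #{w | ψ w = i} := by
    obtain ⟨w, hw⟩ := hψ i
    exact card_pos.2 ⟨w, mem_filter.2 ⟨mem_univ w, hw⟩⟩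
  obtain ⟨σ, hσ⟩ := exists_perm_of_prod_sub_eq_mul_pow hι hp hpos hsum hc
  exact ⟨_, hswitch, nonempty_iso_comap_top σ hσ⟩

theorem sDetermined_four_partite_of_max_prime_general {ι : Type} [Fintype ι] [DecidableEq ι]
    (hι : 4 ≤ Fintype.card ι) (n : ι → ℕ) (hn : ∀ i, 1 ≤ n i)
    (hp : Nat.Prime (Finset.univ.sup n)) :
    SDetermined (completeMultipartiteGraph fun i => Fin (n i)) := by
  have hfiber (i : ι) : #{v : Σ i, Fin (n i) | v.1 = i} = n i := by
    rw [← Fintype.card_subtype, Fintype.card_congr (Equiv.sigmaSubtype i), Fintype.card_fin]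
  exact sDetermined_comap_top hι (fun i => ⟨⟨i, 0, hn i⟩, rfl⟩) (by simpa only [hfiber] using hp)

/-- **Corollary.** If `max {n_1, n_2, n_3, n_4}` is prime, then the complete
`4`-partite graph `K_{n_1,n_2,n_3,n_4}` is determined, up to switching, by its
Seidel spectrum. -/
theorem sDetermined_four_partite_of_max_prime (n : Fin 4 → ℕ) (hn : ∀ i, 1 ≤ n i)
    (hp : Nat.Prime (Finset.univ.sup n)) :
    SDetermined (completeMultipartiteGraph fun i : Fin 4 => Fin (n i)) :=
  sDetermined_four_partite_of_max_prime_general (by simp) n hn hp
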